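/- Assume the standing hypotheses. Then for every (x,y) ∈ ℕ₀²: (x,y) ∈ S if and only if x·d ≤ y·c (i.e., 0 ≤ φ(x,y) ≤ φ(w)) and x ∈ ⟨a,c⟩ (i.e., x = m·a + n·c for some m, n ∈ ℕ₀). -/

import Mathlib

/- The generator `(0, 1)` makes membership of `(x, y)` in `S` upward closed in `y`: it says that
some representation `x = m * a + n * c` has height `m * b + n * d` at most `y`. Trading `c` copies
of `(a, b)` for `a` copies of `(c, d)` preserves `x`, so `m < c` may be assumed. For such `m` the
height is the least `y` with `x * d ≤ y * c`, because `b * c - a * d = 1` gives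
`(m * b + n * d) * c = x * d + m`. -/

theorem mem_closure_triple_zero_one_iff {M : Type*} [AddCommMonoid M] {a c x : M} {b d y : ℕ} :
    (x, y) ∈ AddSubmonoid.closure ({(0, 1), (a, b), (c, d)} : Set (M × ℕ)) ↔
      ∃ m n : ℕ, x = m • a + n • c ∧ m * b + n * d ≤ y := by
  rw [← Submodule.span_nat_eq_addSubmonoidClosure, Submodule.mem_toAddSubmonoid,
    Submodule.mem_span_triple]
  simp only [Prod.smul_mk, Prod.mk_add_mk, Prod.mk.injEq, smul_eq_mul, smul_zero, mul_one, zero_add]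
  constructor
  · rintro ⟨k, m, n, rfl, rfl⟩
    exact ⟨m, n, rfl, by omega⟩
  · rintro ⟨m, n, rfl, hy⟩
    exact ⟨y - (m * b + n * d), m, n, rfl, by omega⟩

theorem exists_lt_mul_add_mul_eq {c : ℕ} (hc : 0 < c) (a m n : ℕ) :
    ∃ r k : ℕ, r < c ∧ m * a + n * c = r * a + k * c := by
  refine ⟨m % c, n + m / c * a, Nat.mod_lt m hc, ?_⟩
  calc m * a + n * c = (m % c + c * (m / c)) * a + n * c := by rw [Nat.mod_add_div]
    _ = m % c * a + (n + m / c * a) * c := by ring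

theorem add_mul_le_mul_of_mul_add_mul_le {R : Type*} [CommSemiring R] [PartialOrder R]
    [IsOrderedRing R] {a b c d m n y : R} (hdet : a * d ≤ b * c) (hm : 0 ≤ m) (hc : 0 ≤ c)
    (hy : m * b + n * d ≤ y) : (m * a + n * c) * d ≤ y * c :=
  calc (m * a + n * c) * d = m * (a * d) + n * d * c := by ring
    _ ≤ m * (b * c) + n * d * c := by gcongr
    _ = (m * b + n * d) * c := by ring
    _ ≤ y * c := by gcongr

theorem mul_add_mul_lt_add_one_of_add_mul_le_mul {R : Type*} [CommSemiring R] [LinearOrder R]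
    [IsStrictOrderedRing R] {a b c d m n y : R} (hdet : b * c ≤ a * d + 1) (hm : 0 ≤ m)
    (hmc : m < c) (hy : (m * a + n * c) * d ≤ y * c) : m * b + n * d < y + 1 := by
  have h_lt : (m * b + n * d) * c < (y + 1) * c :=
    calc (m * b + n * d) * c = m * (b * c) + n * d * c := by ring
      _ ≤ m * (a * d + 1) + n * d * c := by gcongr
      _ = (m * a + n * c) * d + m := by ring
      _ < y * c + c := add_lt_add_of_le_of_lt hy hmc
      _ = (y + 1) * c := by ring
  exact lt_of_mul_lt_mul_right h_lt (hm.trans hmc.le)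

/-- Embedding dimension 3, standing hypotheses: a, b, c > 0, b·c − a·d = 1,
S = ⟨(0,1), (a,b), (c,d)⟩.  Then (x,y) ∈ S iff x·d ≤ y·c (i.e. φ(x,y) ≤ φ(c,d))
and x ∈ ⟨a,c⟩. -/
theorem embdim3_membership (a b c d : ℕ) (ha : 0 < a) (hb : 0 < b) (hc : 0 < c)
    (hstar : b * c = a * d + 1) :
    ∀ x y : ℕ,
      (x, y) ∈ AddSubmonoid.closure
          ({((0 : ℕ), (1 : ℕ)), (a, b), (c, d)} : Set (ℕ × ℕ)) ↔
        x * d ≤ y * c ∧ ∃ m n : ℕ, x = m * a + n * c := by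
  intro x y
  simp only [mem_closure_triple_zero_one_iff, smul_eq_mul]
  constructor
  · rintro ⟨m, n, rfl, hy⟩
    have hdet : a * d ≤ b * c := hstar ▸ Nat.le_succ _
    exact ⟨add_mul_le_mul_of_mul_add_mul_le hdet m.zero_le c.zero_le hy, m, n, rfl⟩
  · rintro ⟨hslope, m, n, rfl⟩
    obtain ⟨r, k, hr, hx⟩ := exists_lt_mul_add_mul_eq hc a m n
    rw [hx] at hslope
    have h_height : r * b + k * d < y + 1 :=
      mul_add_mul_lt_add_one_of_add_mul_le_mul hstar.le r.zero_le hr hslope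
    exact ⟨r, k, hx, Nat.lt_succ_iff.mp h_height⟩
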